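/- arXiv:1802.08161 — 2 statements merged into one kernel-verified Lean document; each statement's English description precedes it below -/
import Mathlib

section
/- Let K ≥ 2, d ≥ 0 and T > 2d be integers. For a parameter array β = (β_{ij l})_{1≤i≤K, 1≤j≤K−1, 0≤l≤2d} of real numbers, define for each t ∈ {1,…,T} and each i ∈ {1,…,K}: g^β_{ij}(t) = exp(β_{ij0} + ∑_{l=1}^d [β_{ij,2l−1} cos(2πlt/T) + β_{ij,2l} sin(2πlt/T)]) for 1 ≤ j ≤ K−1, and the stochastic matrix Q^β(t) by Q^β_{ij}(t) = g^β_{ij}(t)/(1 + ∑_{j'=1}^{K−1} g^β_{ij'}(t)) for 1 ≤ j ≤ K−1 and Q^β_{iK}(t) = 1/(1 + ∑_{j'=1}^{K−1} g^β_{ij'}(t)). If two parameter arrays β and β' satisfy Q^β_{ij}(t) = Q^{β'}_{ij}(t) for all i,j ∈ {1,…,K} and all t ∈ {1,…,T}, then β = β'. -/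
open Real

/-- The positive weight g^β_{ij}(t) = exp(β_{ij0} + ∑_{l=1}^d [β_{ij,2l−1} cos(2πlt/T)
+ β_{ij,2l} sin(2πlt/T)]) of the softmax parametrization of SHMM transition matrices. -/
noncomputable def trigWeight (K d T : ℕ) (β : Fin K → Fin (K - 1) → Fin (2 * d + 1) → ℝ)
    (i : Fin K) (j : Fin (K - 1)) (t : ℕ) : ℝ :=
  Real.exp (β i j ⟨0, by omega⟩ + ∑ l : Fin d,
    (β i j ⟨2 * (l : ℕ) + 1, by have := l.isLt; omega⟩ *
        Real.cos (2 * Real.pi * ((l : ℕ) + 1) * t / T) +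
     β i j ⟨2 * (l : ℕ) + 2, by have := l.isLt; omega⟩ *
        Real.sin (2 * Real.pi * ((l : ℕ) + 1) * t / T)))

/-- The stochastic matrix Q^β(t) of the softmax (multinomial-logistic) parametrization:
row i has entries g^β_{ij}(t)/(1+∑_{j'} g^β_{ij'}(t)) for j ≤ K−1 and
1/(1+∑_{j'} g^β_{ij'}(t)) for j = K. -/
noncomputable def softmaxQ (K d T : ℕ) (β : Fin K → Fin (K - 1) → Fin (2 * d + 1) → ℝ)
    (t : ℕ) : Matrix (Fin K) (Fin K) ℝ :=
  Matrix.of fun i j =>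
    if h : (j : ℕ) < K - 1 then
      trigWeight K d T β i ⟨j, h⟩ t / (1 + ∑ j' : Fin (K - 1), trigWeight K d T β i j' t)
    else
      1 / (1 + ∑ j' : Fin (K - 1), trigWeight K d T β i j' t)

open Polynomial in
/-- A real trigonometric polynomial of degree at most `d` which vanishes at more than `2 * d` points
of the unit circle has only zero coefficients. -/
theorem trigPoly_coeff_eq_zero {ι : Type*} [Fintype ι] {d : ℕ} (hd : 2 * d < Fintype.card ι)
    {θ : ι → ℝ} (hθ : Function.Injective fun i => Complex.exp (θ i * Complex.I))
    {a₀ : ℝ} {a b : Fin d → ℝ}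
    (h : ∀ i, a₀ + ∑ l : Fin d, (a l * Real.cos (((l : ℕ) + 1) * θ i) +
      b l * Real.sin (((l : ℕ) + 1) * θ i)) = 0) :
    a₀ = 0 ∧ ∀ l, a l = 0 ∧ b l = 0 := by
  let p : ℂ[X] := C (a₀ : ℂ) * X ^ d + ∑ l : Fin d,
    (C ((a l - b l * Complex.I) / 2) * X ^ (d + 1 + (l : ℕ)) +
      C ((a l + b l * Complex.I) / 2) * X ^ (d - 1 - (l : ℕ)))
  have natDegree_p : p.natDegree ≤ 2 * d := by
    refine natDegree_add_le_of_degree_le ((natDegree_C_mul_X_pow_le _ _).trans (by omega))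
      (natDegree_sum_le_of_forall_le _ _ fun l _ => ?_)
    have := l.isLt
    exact natDegree_add_le_of_degree_le ((natDegree_C_mul_X_pow_le _ _).trans (by omega))
      ((natDegree_C_mul_X_pow_le _ _).trans (by omega))
  have p_eq_zero : p = 0 := by
    refine eq_zero_of_natDegree_lt_card_of_eval_eq_zero p hθ (fun i => ?_)
      (natDegree_p.trans_lt hd)
    have hi := congrArg (fun x : ℝ => Complex.exp (θ i * Complex.I) ^ d * (x : ℂ)) (h i)
    simp only [Complex.ofReal_zero, mul_zero] at hi
    rw [← hi]
    simp only [p, eval_add, eval_mul, eval_C, eval_pow, eval_X, eval_finsetSum]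
    push_cast
    rw [mul_add, mul_comm (a₀ : ℂ), Finset.mul_sum]
    congr 1
    refine Finset.sum_congr rfl fun l _ => ?_
    have hl := l.isLt
    have exp_pos : Complex.exp (((l : ℕ) + 1) * θ i * Complex.I) =
        Complex.exp (θ i * Complex.I) ^ ((l : ℕ) + 1) := by
      rw [← Complex.exp_nat_mul]
      push_cast
      ring_nf
    have exp_neg : Complex.exp (θ i * Complex.I) ^ (d - 1 - (l : ℕ)) =
        Complex.exp (θ i * Complex.I) ^ d *
          Complex.exp (-(((l : ℕ) + 1) * θ i) * Complex.I) := by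
      rw [neg_mul, Complex.exp_neg, exp_pos, eq_mul_inv_iff_mul_eq₀ (by simp), ← pow_add]
      congr 1
      omega
    rw [Complex.cos, Complex.sin, exp_neg, exp_pos]
    ring
  constructor
  · have hc : p.coeff d = 0 := by simp [p_eq_zero]
    have hsum : ∀ l : Fin d, ¬ d = d + 1 + (l : ℕ) ∧ ¬ d = d - 1 - (l : ℕ) := fun l => by
      have := l.isLt
      omega
    simpa [p, coeff_X_pow, hsum] using hc
  · intro m
    have hc : p.coeff (d + 1 + (m : ℕ)) = 0 := by simp [p_eq_zero]
    have hsum : ∀ l : Fin d, ¬ d + 1 + (m : ℕ) = d - 1 - (l : ℕ) := fun l => by omega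
    have hne : ¬ d + 1 + (m : ℕ) = d := by omega
    have hm : ((a m - b m * Complex.I) / 2 : ℂ) = 0 := by
      simpa [p, coeff_X_pow, hsum, hne, Fin.val_inj] using hc
    simpa [Complex.ext_iff] using hm

/-- The points `exp (2πit/T)`, for `t` in `{1, …, T}`, are pairwise distinct. -/
theorem injective_exp_two_pi_mul_div (T : ℕ) :
    Function.Injective fun k : Fin T =>
      Complex.exp ((2 * Real.pi * ((k : ℕ) + 1 : ℕ) / T : ℝ) * Complex.I) := by
  intro k m hkm
  have hT : T ≠ 0 := by have := k.isLt; omega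
  have hζ := Complex.isPrimitiveRoot_exp T hT
  have exp_eq : ∀ k : ℕ, Complex.exp ((2 * Real.pi * (k + 1 : ℕ) / T : ℝ) * Complex.I) =
      Complex.exp (2 * Real.pi * Complex.I / T) ^ k *
        Complex.exp (2 * Real.pi * Complex.I / T) := fun k => by
    rw [← pow_succ, ← Complex.exp_nat_mul]
    push_cast
    ring_nf
  simp only [exp_eq] at hkm
  exact Fin.ext (hζ.pow_inj k.isLt m.isLt (mul_right_cancel₀ (Complex.exp_ne_zero _) hkm))

/-- The transition matrix at time `t` determines the softmax weights at time `t`. -/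
theorem trigWeight_eq_of_softmaxQ_eq {K d T : ℕ}
    {β β' : Fin K → Fin (K - 1) → Fin (2 * d + 1) → ℝ} {t : ℕ}
    (h : softmaxQ K d T β t = softmaxQ K d T β' t) (i : Fin K) (j : Fin (K - 1)) :
    trigWeight K d T β i j t = trigWeight K d T β' i j t := by
  have hj := j.isLt
  have hpos : ∀ γ : Fin K → Fin (K - 1) → Fin (2 * d + 1) → ℝ,
      0 < 1 + ∑ j' : Fin (K - 1), trigWeight K d T γ i j' t := fun γ =>
    add_pos_of_pos_of_nonneg one_pos (Finset.sum_nonneg fun _ _ => (Real.exp_pos _).le)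
  have hlast := congrFun (congrFun h i) ⟨K - 1, by omega⟩
  have hentry := congrFun (congrFun h i) ⟨j, by omega⟩
  simp only [softmaxQ, Matrix.of_apply, lt_irrefl, dite_false, one_div, inv_inj] at hlast
  simp only [softmaxQ, Matrix.of_apply, hj, dite_true, Fin.eta, hlast] at hentry
  exact (div_left_inj' (hpos β').ne').mp hentry

/-- If T > 2d, the parameter β of the softmax parametrization is
identified by the transition matrices Q^β(1),…,Q^β(T). -/
theorem softmaxQ_injective (K d T : ℕ) (hK : 2 ≤ K) (hT : 2 * d < T)
    (β β' : Fin K → Fin (K - 1) → Fin (2 * d + 1) → ℝ)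
    (h : ∀ t ∈ Finset.Icc 1 T, softmaxQ K d T β t = softmaxQ K d T β' t) :
    β = β' := by
  funext i j
  have hzero := trigPoly_coeff_eq_zero (by simpa using hT) (injective_exp_two_pi_mul_div T)
    (a₀ := β i j ⟨0, by omega⟩ - β' i j ⟨0, by omega⟩)
    (a := fun l : Fin d => β i j ⟨2 * (l : ℕ) + 1, by omega⟩ - β' i j ⟨2 * (l : ℕ) + 1, by omega⟩)
    (b := fun l : Fin d => β i j ⟨2 * (l : ℕ) + 2, by omega⟩ - β' i j ⟨2 * (l : ℕ) + 2, by omega⟩)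
    (fun k => by
      have hk := Real.exp_injective (trigWeight_eq_of_softmaxQ_eq
        (h ((k : ℕ) + 1) (Finset.mem_Icc.mpr ⟨by omega, k.isLt⟩)) i j)
      have angle_eq : ∀ l : ℕ, ((l : ℝ) + 1) * (2 * Real.pi * ((k : ℕ) + 1 : ℕ) / T) =
          2 * Real.pi * (l + 1) * ((k : ℕ) + 1 : ℕ) / T := fun l => by ring
      rw [← sub_eq_zero, add_sub_add_comm, ← Finset.sum_sub_distrib] at hk
      rw [← hk]
      congr 1
      refine Finset.sum_congr rfl fun l _ => ?_
      rw [angle_eq]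
      ring)
  ext ⟨n, hn⟩
  obtain rfl | ⟨l, rfl⟩ | ⟨l, rfl⟩ : n = 0 ∨ (∃ l, n = 2 * l + 1) ∨ ∃ l, n = 2 * l + 2 := by
    obtain ⟨l, hl⟩ | ⟨l, hl⟩ := n.even_or_odd
    · obtain rfl | hl0 := Nat.eq_zero_or_pos l
      · exact Or.inl hl
      · exact Or.inr (Or.inr ⟨l - 1, by omega⟩)
    · exact Or.inr (Or.inl ⟨l, hl⟩)
  · exact sub_eq_zero.mp hzero.1
  · exact sub_eq_zero.mp (hzero.2 ⟨l, by omega⟩).1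
  · exact sub_eq_zero.mp (hzero.2 ⟨l, by omega⟩).2
end

section
/- Let K ≥ 2, d ≥ 0 and T ≥ 1 be integers. For β = (β_{ijl})_{1≤i≤K,1≤j≤K−1,0≤l≤2d} ∈ ℝ^{K(K−1)(2d+1)} and t ∈ {1,…,T}, define the K×K stochastic matrix Q^β(t) by Q^β_{ij}(t) = g^β_{ij}(t)/(1+∑_{j'=1}^{K−1} g^β_{ij'}(t)) for j ≤ K−1 and Q^β_{iK}(t) = 1/(1+∑_{j'=1}^{K−1} g^β_{ij'}(t)), where g^β_{ij}(t) = exp(β_{ij0} + ∑_{l=1}^d [β_{ij,2l−1}cos(2πlt/T) + β_{ij,2l}sin(2πlt/T)]). Then the set {β ∈ ℝ^{K(K−1)(2d+1)} : ∃ t ∈ {1,…,T}, Q^β(t) is not invertible} has Lebesgue measure zero. In particular, for almost every β, the matrices Q^β(1),…,Q^β(T) are all invertible. -/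
open Real MeasureTheory

/-- A real-analytic function on a finite-dimensional real vector space which does not vanish
identically has a zero set of Haar measure zero. -/
theorem AnalyticOnNhd.addHaar_zeroSet_eq_zero {E F : Type*}
    [NormedAddCommGroup E] [NormedSpace ℝ E] [FiniteDimensional ℝ E] [MeasurableSpace E]
    [BorelSpace E] [NormedAddCommGroup F] [NormedSpace ℝ F] (μ : Measure E)
    [μ.IsAddHaarMeasure] {f : E → F} (hf : AnalyticOnNhd ℝ f Set.univ) {x₀ : E}
    (hx₀ : f x₀ ≠ 0) : μ {x | f x = 0} = 0 := by
  have hcont : Continuous f := hf.continuous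
  have hclosed : IsClosed {p : E × ℝ | f (x₀ + p.2 • p.1) = 0} :=
    isClosed_singleton.preimage
      (hcont.comp (continuous_const.add (continuous_snd.smul continuous_fst)))
  have hline (v : E) : ∀ᵐ t : ℝ, f (x₀ + t • v) ≠ 0 := by
    have hg : AnalyticOnNhd ℝ (fun t : ℝ => f (x₀ + t • v)) Set.univ := fun t _ =>
      (hf _ (Set.mem_univ _)).comp (g := f) (f := fun t : ℝ => x₀ + t • v) (by fun_prop)
    have h := hg.preimage_zero_mem_codiscreteWithin (x := 0) (by simpa using hx₀)
      (Set.mem_univ _) isConnected_univ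
    have hae := ae_restrict_le_codiscreteWithin (μ := volume) MeasurableSet.univ h
    rwa [Measure.restrict_univ] at hae
  have hswap : ∀ᵐ t : ℝ, ∀ᵐ v ∂μ, f (x₀ + t • v) ≠ 0 :=
    (Measure.ae_ae_comm hclosed.isOpen_compl.measurableSet).1 (.of_forall hline)
  obtain ⟨t, ht, ht0⟩ := (hswap.and (Measure.ae_ne volume (0 : ℝ))).exists
  have hpre : μ ((t • ·) ⁻¹' ((x₀ + ·) ⁻¹' {x | f x = 0})) = 0 := by
    simpa [ae_iff] using ht
  rw [Measure.addHaar_preimage_smul μ ht0, measure_preimage_add] at hpre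
  refine (mul_eq_zero.1 hpre).resolve_left ?_
  simp [ht0]

theorem analyticAt_trigWeight (K d T : ℕ) (i : Fin K) (j : Fin (K - 1)) (t : ℕ)
    (β : Fin K → Fin (K - 1) → Fin (2 * d + 1) → ℝ) :
    AnalyticAt ℝ (fun β => trigWeight K d T β i j t) β := by
  have hcoord (l : Fin (2 * d + 1)) :
      AnalyticAt ℝ (fun β : Fin K → Fin (K - 1) → Fin (2 * d + 1) → ℝ => β i j l) β :=
    ((ContinuousLinearMap.proj (R := ℝ) (φ := fun _ => ℝ) l).comp
      ((ContinuousLinearMap.proj (R := ℝ) (φ := fun _ => Fin (2 * d + 1) → ℝ) j).comp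
        (ContinuousLinearMap.proj (R := ℝ)
          (φ := fun _ => Fin (K - 1) → Fin (2 * d + 1) → ℝ) i))).analyticAt β
  exact ((hcoord _).add (Finset.univ.analyticAt_fun_sum fun l _ =>
    ((hcoord _).mul analyticAt_const).add ((hcoord _).mul analyticAt_const))).rexp

theorem one_add_sum_trigWeight_pos (K d T : ℕ)
    (β : Fin K → Fin (K - 1) → Fin (2 * d + 1) → ℝ) (i : Fin K) (t : ℕ) :
    0 < 1 + ∑ j : Fin (K - 1), trigWeight K d T β i j t :=
  add_pos_of_pos_of_nonneg one_pos (Finset.sum_nonneg fun _ _ => (Real.exp_pos _).le)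

theorem analyticAt_softmaxQ_apply (K d T : ℕ) (i j : Fin K) (t : ℕ)
    (β : Fin K → Fin (K - 1) → Fin (2 * d + 1) → ℝ) :
    AnalyticAt ℝ (fun β => softmaxQ K d T β t i j) β := by
  have hden : AnalyticAt ℝ (fun β => 1 + ∑ j : Fin (K - 1), trigWeight K d T β i j t) β :=
    analyticAt_const.add
      (Finset.univ.analyticAt_fun_sum fun j _ => analyticAt_trigWeight K d T i j t β)
  have hne := (one_add_sum_trigWeight_pos K d T β i t).ne'
  by_cases h : (j : ℕ) < K - 1
  · simpa only [softmaxQ, Matrix.of_apply, dif_pos h] using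
      (analyticAt_trigWeight K d T i ⟨j, h⟩ t β).fun_div hden hne
  · simpa only [softmaxQ, Matrix.of_apply, dif_neg h] using analyticAt_const.fun_div hden hne

theorem analyticAt_det_softmaxQ (K d T t : ℕ)
    (β : Fin K → Fin (K - 1) → Fin (2 * d + 1) → ℝ) :
    AnalyticAt ℝ (fun β => (softmaxQ K d T β t).det) β := by
  simp only [Matrix.det_apply']
  exact Finset.univ.analyticAt_fun_sum fun σ _ => analyticAt_const.mul
    (Finset.univ.analyticAt_fun_prod fun i _ => analyticAt_softmaxQ_apply K d T (σ i) i t β)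

/-- Parameters for which, up to positive scaling of its rows, `softmaxQ` is
`(K - 1) • 1 + J`, where `J` is the all-ones matrix. -/
noncomputable def diagonallyDominantParam (K d : ℕ) :
    Fin K → Fin (K - 1) → Fin (2 * d + 1) → ℝ :=
  fun i j l => if (l : ℕ) = 0 then
    if (i : ℕ) = j then Real.log K else if (i : ℕ) < K - 1 then 0 else -Real.log K
  else 0

theorem trigWeight_diagonallyDominantParam (K d T : ℕ) (i : Fin K) (j : Fin (K - 1)) (t : ℕ) :
    trigWeight K d T (diagonallyDominantParam K d) i j t =
      if (i : ℕ) = j then (K : ℝ) else if (i : ℕ) < K - 1 then 1 else (K : ℝ)⁻¹ := by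
  have hK : (0 : ℝ) < K := Nat.cast_pos.2 i.pos
  simp only [trigWeight, diagonallyDominantParam]
  simp only [Nat.add_eq_zero_iff, one_ne_zero, OfNat.ofNat_ne_zero, and_false, if_true, if_false,
    zero_mul, add_zero, Finset.sum_const_zero]
  split_ifs <;> simp [Real.exp_neg, Real.exp_log hK]

theorem exists_softmaxQ_diagonallyDominantParam (K d T : ℕ) (i : Fin K) (t : ℕ) :
    ∃ r : ℝ, 0 < r ∧ ∀ j, softmaxQ K d T (diagonallyDominantParam K d) t i j =
      r * if i = j then (K : ℝ) else 1 := by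
  have hK : (0 : ℝ) < K := Nat.cast_pos.2 i.pos
  have hD := one_add_sum_trigWeight_pos K d T (diagonallyDominantParam K d) i t
  set D := 1 + ∑ j : Fin (K - 1), trigWeight K d T (diagonallyDominantParam K d) i j t with hDdef
  refine ⟨(if (i : ℕ) < K - 1 then 1 else (K : ℝ)⁻¹) / D, by split_ifs <;> positivity,
    fun j => ?_⟩
  have hi := i.isLt
  have hj := j.isLt
  simp only [softmaxQ, Matrix.of_apply, ← hDdef]
  clear_value D
  simp only [trigWeight_diagonallyDominantParam, Fin.ext_iff]
  split_ifs <;> first | omega | field_simp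

theorem det_softmaxQ_diagonallyDominantParam_ne_zero (K d T t : ℕ) :
    (softmaxQ K d T (diagonallyDominantParam K d) t).det ≠ 0 := by
  refine det_ne_zero_of_sum_row_lt_diag fun i => ?_
  obtain ⟨r, hr, hrow⟩ := exists_softmaxQ_diagonallyDominantParam K d T i t
  have hoff : ∀ j ∈ Finset.univ.erase i,
      ‖softmaxQ K d T (diagonallyDominantParam K d) t i j‖ = r := fun j hj => by
    rw [hrow, if_neg (Finset.ne_of_mem_erase hj).symm, mul_one, Real.norm_of_nonneg hr.le]
  have hcard : ((K - 1 : ℕ) : ℝ) < K := Nat.cast_lt.2 (Nat.sub_lt i.pos one_pos)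
  rw [Finset.sum_congr rfl hoff, hrow, if_pos rfl, Real.norm_of_nonneg (by positivity)]
  simpa [Finset.card_erase_of_mem, mul_comm r] using mul_lt_mul_of_pos_right hcard hr

/-- The set of parameters β for which some transition matrix
Q^β(t), t ∈ {1,…,T}, fails to be invertible has Lebesgue measure zero. -/
theorem softmaxQ_ae_invertible (K d T : ℕ) (hK : 2 ≤ K) (hT : 1 ≤ T) :
    volume {β : Fin K → Fin (K - 1) → Fin (2 * d + 1) → ℝ |
      ∃ t ∈ Finset.Icc 1 T, ¬ IsUnit (softmaxQ K d T β t)} = 0 := by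
  have : (volume : Measure (Fin (K - 1) → Fin (2 * d + 1) → ℝ)).IsAddHaarMeasure :=
    Measure.pi.isAddHaarMeasure _
  have : (volume : Measure (Fin K → Fin (K - 1) → Fin (2 * d + 1) → ℝ)).IsAddHaarMeasure :=
    Measure.pi.isAddHaarMeasure _
  refine measure_mono_null (t := ⋃ t : ℕ, {β | (softmaxQ K d T β t).det = 0}) ?_
    (measure_iUnion_null fun t => AnalyticOnNhd.addHaar_zeroSet_eq_zero volume
      (fun β _ => analyticAt_det_softmaxQ K d T t β)
      (det_softmaxQ_diagonallyDominantParam_ne_zero K d T t))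
  rintro β ⟨t, -, ht⟩
  rw [Matrix.isUnit_iff_isUnit_det, isUnit_iff_ne_zero, not_not] at ht
  exact Set.mem_iUnion.2 ⟨t, ht⟩
end
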